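/- Let 0 < s ≤ 1/2, let x be a finite string of positive integers, and let a be a positive integer. Then ∑_{i=a}^{50a} γ(C_{[x,i]})^s ≥ c · γ(C_x)^s, where c = (ln 25 − 1)/2; moreover c > 1. -/

import Mathlib

open MeasureTheory Filter

/-- The Gauss map `T x = 1/x - ⌊1/x⌋`. -/
noncomputable def gaussMap (x : ℝ) : ℝ := 1 / x - ⌊1 / x⌋

/-- The `i`-th continued fraction digit (0-indexed): `a_{i+1}(x) = ⌊1/T^i(x)⌋`. -/
noncomputable def cfDigit (x : ℝ) (i : ℕ) : ℕ := (⌊1 / (gaussMap^[i] x)⌋).toNat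

/-- The continued fraction cylinder of a finite string of positive integers. -/
def cfCylinder (v : List ℕ+) : Set ℝ :=
  {x | x ∈ Set.Ioo (0 : ℝ) 1 ∧ Irrational x ∧
    ∀ (i : ℕ) (hi : i < v.length), cfDigit x i = (v.get ⟨i, hi⟩ : ℕ)}

/-- The Gauss measure of a set: `γ(A) = (1/ln 2) ∫_A 1/(1+x) dx`. -/
noncomputable def gaussSet (A : Set ℝ) : ℝ := (1 / Real.log 2) * ∫ x in A, 1 / (1 + x)

/-- A continued fraction `s`-gale. -/
def IsCFGale (s : ℝ) (d : List ℕ+ → ℝ) : Prop :=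
  (∀ w, 0 ≤ d w) ∧
  ∀ w : List ℕ+,
    d w * gaussSet (cfCylinder w) ^ s =
      ∑' i : ℕ+, d (w ++ [i]) * gaussSet (cfCylinder (w ++ [i])) ^ s

/-- A binary `s`-gale. -/
def IsBinGale (s : ℝ) (h : List Bool → ℝ) : Prop :=
  (∀ w, 0 ≤ h w) ∧
  ∀ w : List Bool, h (w ++ [false]) + h (w ++ [true]) = (2 : ℝ) ^ s * h w

/-- The real number `0.w` for a finite binary string `w`. -/
noncomputable def binVal (w : List Bool) : ℝ :=
  ∑ i ∈ Finset.range w.length, (if w.getD i false then ((2 : ℝ)⁻¹) ^ (i + 1) else 0)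

/-- The dyadic cylinder `[0.w, 0.w + 2^{-|w|})`. -/
noncomputable def binCylinder (w : List Bool) : Set ℝ :=
  Set.Ico (binVal w) (binVal w + ((2 : ℝ)⁻¹) ^ w.length)

/-- The prefix of length `n` of the continued fraction expansion of `x`. -/
noncomputable def cfPrefix (x : ℝ) (n : ℕ) : List ℕ+ :=
  (List.range n).map fun i => (cfDigit x i).toPNat'

/-- The prefix of length `n` of the binary expansion of `x`. -/
noncomputable def binPrefix (x : ℝ) (n : ℕ) : List Bool :=
  (List.range n).map fun i => decide (⌊x * 2 ^ (i + 1)⌋ % 2 = 1)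

/-- The value of a finite continued fraction. -/
noncomputable def cfVal : List ℕ+ → ℝ
  | [] => 0
  | a :: w => 1 / (((a : ℕ) : ℝ) + cfVal w)

/-!
For a string `w`, the cylinder `C_w` is, up to rationals, the image of `(0, 1)` under the Möbius map
`ψ_w t = (p + p' t) / (q + q' t)`, where `p / q` and `p' / q'` are the last two convergents of `w`.
Pulling the Gauss measure back along `ψ_w` gives a measure on `(0, 1)` whose density is within a
factor `4` of a constant, because `q' ≤ q` and `p' + q' ≤ p + q`. Since `C_[i]` has length
`1 / (i (i + 1))`, it follows that `γ(C_[w,i]) / γ(C_w)` lies between `1 / (4 i (i + 1))` and `1`,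
so for `s ≤ 1 / 2` its `s`-th power is at least its square root, hence at least `1 / (2 (i + 1))`.
Summing this harmonic tail bounds the sum from below by a logarithm.
-/

open Set

theorem floor_natCast_add_of_mem_Ioo (n : ℕ) {t : ℝ} (ht : t ∈ Ioo 0 1) :
    ⌊(n : ℝ) + t⌋ = n := by
  rw [Int.floor_natCast_add, Int.floor_eq_zero_iff.2 ⟨ht.1.le, ht.2⟩, add_zero]

theorem measureReal_inter_irrational (μ : Measure ℝ) [NullSingletonClass μ] (S : Set ℝ) :
    μ.real (S ∩ {x | Irrational x}) = μ.real S := by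
  have hnull : μ {x : ℝ | Irrational x}ᶜ = 0 :=
    mem_ae_iff.1 ((countable_range ((↑) : ℚ → ℝ)).ae_notMem μ)
  exact congrArg ENNReal.toReal (measure_inter_conull hnull)

theorem mul_rpow_le_rpow_of_sq_mul_le {A B c s : ℝ} (hB : 0 < B) (hBA : B ≤ A)
    (hc : c ^ 2 * A ≤ B) (hs : s ≤ 1 / 2) : c * A ^ s ≤ B ^ s := by
  have hA : 0 < A := hB.trans_le hBA
  have hratio : c ≤ (B / A) ^ s :=
    calc c ≤ √(B / A) := Real.le_sqrt_of_sq_le ((le_div_iff₀ hA).2 hc)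
      _ = (B / A) ^ (1 / 2 : ℝ) := Real.sqrt_eq_rpow _
      _ ≤ (B / A) ^ s :=
        Real.rpow_le_rpow_of_exponent_ge (div_pos hB hA) ((div_le_one hA).2 hBA) hs
  rwa [Real.div_rpow hB.le hA.le, le_div_iff₀ (Real.rpow_pos_of_pos hA s)] at hratio

theorem log_add_one_sub_log_le {x : ℝ} (hx : 0 < x) :
    Real.log (x + 1) - Real.log x ≤ 1 / x := by
  rw [← Real.log_div (by positivity) hx.ne']
  calc Real.log ((x + 1) / x) ≤ (x + 1) / x - 1 := Real.log_le_sub_one_of_pos (by positivity)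
    _ = 1 / x := by
      field_simp
      ring

theorem log_div_le_sum_Icc_one_div {a b : ℕ} (hab : a ≤ b) :
    Real.log ((b + 2) / (a + 1)) ≤ ∑ i ∈ Finset.Icc a b, (1 / (i + 1) : ℝ) := by
  rw [Real.log_div (by positivity) (by positivity), ← one_add_one_eq_two, ← add_assoc]
  induction b, hab using Nat.le_induction with
  | base =>
    simpa only [Finset.Icc_self, Finset.sum_singleton] using
      log_add_one_sub_log_le (x := a + 1) (by positivity)
  | succ b hab ih =>
    rw [Finset.sum_Icc_succ_top (by omega)]
    have hlog := log_add_one_sub_log_le (x := b + 1 + 1) (by positivity)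
    push_cast
    linarith

theorem sum_Icc_pnat_eq_sum_Icc_nat {M : Type*} [AddCommMonoid M] (f : ℕ → M) (a b : ℕ+) :
    ∑ i ∈ Finset.Icc a b, f i = ∑ i ∈ Finset.Icc (a : ℕ) b, f i :=
  (Finset.sum_map (Finset.Icc a b) (Function.Embedding.subtype _) f).symm.trans
    (congrArg (∑ i ∈ ·, f i) (PNat.map_subtype_embedding_Icc a b))

theorem three_lt_log_25 : 3 < Real.log 25 := by
  rw [Real.lt_log_iff_exp_lt (by norm_num)]
  calc Real.exp 3 = Real.exp 1 ^ 3 := by rw [← Real.exp_nat_mul, Nat.cast_ofNat, mul_one]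
    _ < 2.7182818286 ^ 3 := by
        gcongr
        exact Real.exp_one_lt_d9
    _ < 25 := by norm_num

theorem log_25_le_log_div (a : ℕ+) :
    Real.log 25 ≤ Real.log ((((50 * a : ℕ+) : ℕ) + 2) / ((a : ℕ) + 1)) := by
  have ha : (1 : ℝ) ≤ (a : ℕ) := Nat.one_le_cast.2 a.pos
  refine Real.log_le_log (by norm_num) ((le_div_iff₀ (by positivity)).2 ?_)
  push_cast
  linarith

theorem gaussMap_eq_sub_of_floor_eq {x : ℝ} {n : ℕ} (h : ⌊1 / x⌋ = n) :
    gaussMap x = 1 / x - n := by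
  rw [gaussMap, h, Int.cast_natCast]

theorem gaussMap_one_div_natCast_add (n : ℕ) {t : ℝ} (ht : t ∈ Ioo 0 1) :
    gaussMap (1 / (n + t)) = t := by
  rw [gaussMap_eq_sub_of_floor_eq (n := n), one_div_one_div, add_sub_cancel_left]
  rw [one_div_one_div, floor_natCast_add_of_mem_Ioo n ht]

theorem irrational_gaussMap {x : ℝ} (hx : Irrational x) : Irrational (gaussMap x) := by
  rw [gaussMap, one_div]
  exact hx.inv.sub_intCast _

theorem gaussMap_mem_Ioo {x : ℝ} (hx : Irrational x) : gaussMap x ∈ Ioo 0 1 :=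
  ⟨(Int.fract_nonneg (1 / x)).lt_of_ne' (irrational_gaussMap hx).ne_zero, Int.fract_lt_one (1 / x)⟩

theorem cfDigit_zero_eq_iff {x : ℝ} {b : ℕ+} : cfDigit x 0 = b ↔ ⌊1 / x⌋ = (b : ℕ) := by
  have hb : 0 < (b : ℕ) := b.pos
  simp only [cfDigit, Function.iterate_zero, id_eq]
  omega

theorem measurable_gaussMap : Measurable gaussMap := by
  unfold gaussMap
  fun_prop

theorem measurable_cfDigit (i : ℕ) : Measurable fun x => cfDigit x i :=
  (measurable_of_countable Int.toNat).comp
    ((measurable_gaussMap.iterate i).const_div 1).floor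

theorem cfCylinder_subset_Ioo (w : List ℕ+) : cfCylinder w ⊆ Ioo 0 1 := fun _ hx => hx.1

theorem cfCylinder_subset_Icc (w : List ℕ+) : cfCylinder w ⊆ Icc 0 1 :=
  (cfCylinder_subset_Ioo w).trans Ioo_subset_Icc_self

theorem measurableSet_cfCylinder (w : List ℕ+) : MeasurableSet (cfCylinder w) := by
  have h : cfCylinder w = Ioo 0 1 ∩ ({x | Irrational x} ∩
      ⋂ (i) (hi : i < w.length), (fun x => cfDigit x i) ⁻¹' {(w.get ⟨i, hi⟩ : ℕ)}) := by
    ext x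
    simp [cfCylinder]
  rw [h]
  exact measurableSet_Ioo.inter (IsGδ.setOfPred_irrational.measurableSet.inter
    (.iInter fun i => .iInter fun _ => measurable_cfDigit i (measurableSet_singleton _)))

theorem cfCylinder_append_subset (w v : List ℕ+) : cfCylinder (w ++ v) ⊆ cfCylinder w := by
  rintro x ⟨hx, hirr, hdigits⟩
  refine ⟨hx, hirr, fun i hi => ?_⟩
  rw [hdigits i (hi.trans_le (by simp)), List.get_eq_getElem, List.getElem_append_left hi,
    List.get_eq_getElem]

theorem cfCylinder_nil : cfCylinder [] = Ioo 0 1 ∩ {x | Irrational x} := by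
  ext x
  simp [cfCylinder]

theorem mem_cfCylinder_cons {b : ℕ+} {w : List ℕ+} {x : ℝ} :
    x ∈ cfCylinder (b :: w) ↔
      x ∈ Ioo 0 1 ∧ Irrational x ∧ ⌊1 / x⌋ = (b : ℕ) ∧ gaussMap x ∈ cfCylinder w := by
  constructor
  · rintro ⟨hx, hirr, hdigits⟩
    exact ⟨hx, hirr, cfDigit_zero_eq_iff.1 (hdigits 0 (Nat.succ_pos _)), gaussMap_mem_Ioo hirr,
      irrational_gaussMap hirr, fun i hi => hdigits (i + 1) (Nat.succ_lt_succ hi)⟩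
  · rintro ⟨hx, hirr, hfloor, -, -, hdigits⟩
    refine ⟨hx, hirr, fun i hi => ?_⟩
    cases i with
    | zero => exact cfDigit_zero_eq_iff.2 hfloor
    | succ i => exact hdigits i (Nat.lt_of_succ_lt_succ hi)

theorem cfCylinder_cons (b : ℕ+) (w : List ℕ+) :
    cfCylinder (b :: w) = (fun t : ℝ => 1 / ((b : ℕ) + t)) '' cfCylinder w := by
  ext x
  constructor
  · intro hx
    obtain ⟨-, -, hfloor, hmem⟩ := mem_cfCylinder_cons.1 hx
    refine ⟨gaussMap x, hmem, ?_⟩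
    simp only [gaussMap_eq_sub_of_floor_eq hfloor, add_sub_cancel, one_div_one_div]
  · rintro ⟨t, ht, rfl⟩
    have ht01 := cfCylinder_subset_Ioo w ht
    have hb : (1 : ℝ) ≤ (b : ℕ) := Nat.one_le_cast.2 b.pos
    have hbt : 1 < (b : ℕ) + t := by linarith [ht01.1]
    refine mem_cfCylinder_cons.2 ⟨⟨by positivity, (div_lt_one (by positivity)).2 hbt⟩, ?_, ?_, ?_⟩
    · simpa only [one_div] using (ht.2.1.natCast_add b).inv
    · rw [one_div_one_div, floor_natCast_add_of_mem_Ioo b ht01]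
    · rwa [gaussMap_one_div_natCast_add b ht01]

theorem cfCylinder_singleton (b : ℕ+) :
    cfCylinder [b] = Ioc (1 / ((b : ℕ) + 1) : ℝ) (1 / (b : ℕ)) ∩ {x | Irrational x} := by
  have hb : (1 : ℝ) ≤ (b : ℕ) := Nat.one_le_cast.2 b.pos
  have floor_eq_iff {x : ℝ} (hx : 0 < x) :
      ⌊1 / x⌋ = (b : ℕ) ↔ x ∈ Ioc (1 / ((b : ℕ) + 1) : ℝ) (1 / (b : ℕ)) := by
    rw [Int.floor_eq_iff, Int.cast_natCast, le_div_comm₀ (by positivity) hx,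
      div_lt_comm₀ hx (by positivity), and_comm, mem_Ioc]
  ext x
  rw [mem_cfCylinder_cons]
  constructor
  · rintro ⟨hx, hirr, hfloor, -⟩
    exact ⟨(floor_eq_iff hx.1).1 hfloor, hirr⟩
  · rintro ⟨hx, hirr⟩
    have hx0 : 0 < x := lt_trans (by positivity) hx.1
    have hx1 : x ≤ 1 := hx.2.trans ((div_le_one (by positivity)).2 hb)
    rw [cfCylinder_nil]
    exact ⟨⟨hx0, hx1.lt_of_ne hirr.ne_one⟩, hirr, (floor_eq_iff hx0).2 hx, gaussMap_mem_Ioo hirr,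
      irrational_gaussMap hirr⟩

theorem volume_real_cfCylinder_nil : volume.real (cfCylinder []) = 1 := by
  rw [cfCylinder_nil, measureReal_inter_irrational, Real.volume_real_Ioo_of_le zero_le_one,
    sub_zero]

theorem volume_real_cfCylinder_singleton (b : ℕ+) :
    volume.real (cfCylinder [b]) = 1 / ((b : ℕ) * ((b : ℕ) + 1)) := by
  have hb : (0 : ℝ) < (b : ℕ) := Nat.cast_pos.2 b.pos
  rw [cfCylinder_singleton, measureReal_inter_irrational,
    Real.volume_real_Ioc_of_le (one_div_le_one_div_of_le hb (by linarith))]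
  field_simp
  ring

theorem gaussSet_mono {S T : Set ℝ} (hT : MeasurableSet T) (hST : S ⊆ T) (hT01 : T ⊆ Icc 0 1) :
    gaussSet S ≤ gaussSet T := by
  have hcont : ContinuousOn (fun x : ℝ => 1 / (1 + x)) (Icc 0 1) :=
    continuousOn_const.div (by fun_prop) fun x hx => by linarith [hx.1]
  have hint : IntegrableOn (fun x : ℝ => 1 / (1 + x)) T := hcont.integrableOn_Icc.mono_set hT01
  have hnonneg : 0 ≤ᵐ[volume.restrict T] fun x : ℝ => 1 / (1 + x) := by
    filter_upwards [ae_restrict_mem hT] with x hx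
    have := (hT01 hx).1
    positivity
  exact mul_le_mul_of_nonneg_left (setIntegral_mono_set hint hnonneg hST.eventuallyLE)
    (by positivity)

/-- The coefficients of a Möbius map `t ↦ (p + p' t) / (q + q' t)` of determinant `±1`, subject to
the inequalities that keep the pullback of the Gauss measure along it close to Lebesgue measure
on `[0, 1]`. The inverse branches of the iterates of the Gauss map are of this form. -/
structure MobiusBranch where
  (p p' q q' : ℝ)
  p_nonneg : 0 ≤ p
  p'_nonneg : 0 ≤ p'
  q_pos : 0 < q
  q'_nonneg : 0 ≤ q'
  q'_le_q : q' ≤ q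
  p'_add_q'_le : p' + q' ≤ p + q
  abs_det : |p' * q - p * q'| = 1

namespace MobiusBranch

/-- The identity map as a Möbius branch. -/
def id : MobiusBranch where
  p := 0
  p' := 1
  q := 1
  q' := 0
  p_nonneg := le_rfl
  p'_nonneg := zero_le_one
  q_pos := one_pos
  q'_nonneg := le_rfl
  q'_le_q := zero_le_one
  p'_add_q'_le := by norm_num
  abs_det := by norm_num

/-- The Möbius branch obtained by applying `y ↦ 1 / (b + y)` after `φ`, which prepends the digit `b`
to a continued fraction. -/
def cons (b : ℕ+) (φ : MobiusBranch) : MobiusBranch where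
  p := φ.q
  p' := φ.q'
  q := (b : ℕ) * φ.q + φ.p
  q' := (b : ℕ) * φ.q' + φ.p'
  p_nonneg := φ.q_pos.le
  p'_nonneg := φ.q'_nonneg
  q_pos := add_pos_of_pos_of_nonneg (mul_pos (Nat.cast_pos.2 b.pos) φ.q_pos) φ.p_nonneg
  q'_nonneg := add_nonneg (mul_nonneg (Nat.cast_nonneg _) φ.q'_nonneg) φ.p'_nonneg
  q'_le_q := by
    have hb : (1 : ℝ) ≤ (b : ℕ) := Nat.one_le_cast.2 b.pos
    linarith [mul_le_mul_of_nonneg_left φ.q'_le_q (sub_nonneg.2 hb), φ.p'_add_q'_le]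
  p'_add_q'_le := by
    linarith [mul_le_mul_of_nonneg_left φ.q'_le_q (Nat.cast_nonneg (α := ℝ) b), φ.p'_add_q'_le]
  abs_det := by
    rw [← φ.abs_det, ← abs_neg]
    congr 1
    ring

/-- The inverse branch of the iterated Gauss map that prepends the digits `w`; its coefficients are
the numerators and denominators of the last two convergents of `w`. -/
def ofDigits : List ℕ+ → MobiusBranch
  | [] => id
  | b :: w => cons b (ofDigits w)

variable (φ : MobiusBranch) {t : ℝ}

/-- The map `t ↦ (p + p' t) / (q + q' t)` of a Möbius branch. -/
noncomputable def map (t : ℝ) : ℝ := (φ.p + φ.p' * t) / (φ.q + φ.q' * t)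

/-- The density of the pullback of `dx / (1 + x)` along a Möbius branch. -/
noncomputable def density (t : ℝ) : ℝ :=
  1 / ((φ.p + φ.q + (φ.p' + φ.q') * t) * (φ.q + φ.q' * t))

theorem denom_pos (ht : 0 ≤ t) : 0 < φ.q + φ.q' * t :=
  add_pos_of_pos_of_nonneg φ.q_pos (mul_nonneg φ.q'_nonneg ht)

theorem num_add_denom_pos (ht : 0 ≤ t) : 0 < φ.p + φ.q + (φ.p' + φ.q') * t := by
  linarith [φ.denom_pos ht, φ.p_nonneg, mul_nonneg φ.p'_nonneg ht]

theorem one_add_map (ht : 0 ≤ t) :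
    1 + φ.map t = (φ.p + φ.q + (φ.p' + φ.q') * t) / (φ.q + φ.q' * t) := by
  rw [map, one_add_div (φ.denom_pos ht).ne']
  ring

theorem id_map (t : ℝ) : id.map t = t := by
  simp [map, id]

theorem cons_map (b : ℕ+) (ht : 0 ≤ t) : (cons b φ).map t = 1 / ((b : ℕ) + φ.map t) := by
  have hadd : (b : ℕ) + φ.map t =
      ((cons b φ).q + (cons b φ).q' * t) / (φ.q + φ.q' * t) := by
    rw [map, add_div' _ _ _ (φ.denom_pos ht).ne']
    simp only [cons]
    ring
  rw [hadd, one_div_div]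
  rfl

theorem cfCylinder_append (w v : List ℕ+) :
    cfCylinder (w ++ v) = (ofDigits w).map '' cfCylinder v := by
  induction w with
  | nil => rw [List.nil_append, ofDigits, funext id_map, image_id']
  | cons b w ih =>
    rw [List.cons_append, cfCylinder_cons, ih, image_image]
    exact image_congr fun t ht =>
      ((ofDigits w).cons_map b (cfCylinder_subset_Ioo v ht).1.le).symm

theorem cfCylinder_eq_image (w : List ℕ+) :
    cfCylinder w = (ofDigits w).map '' cfCylinder [] := by
  rw [← cfCylinder_append, List.append_nil]

theorem hasDerivAt_map (ht : 0 ≤ t) :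
    HasDerivAt φ.map ((φ.p' * φ.q - φ.p * φ.q') / (φ.q + φ.q' * t) ^ 2) t := by
  have hnum : HasDerivAt (fun t => φ.p + φ.p' * t) φ.p' t := by
    simpa using ((hasDerivAt_id t).const_mul φ.p').const_add φ.p
  have hdenom : HasDerivAt (fun t => φ.q + φ.q' * t) φ.q' t := by
    simpa using ((hasDerivAt_id t).const_mul φ.q').const_add φ.q
  exact (hnum.div hdenom (φ.denom_pos ht).ne').congr_deriv (by ring)

theorem injOn_map : InjOn φ.map (Ici 0) := by
  intro t ht u hu h
  have hdet : φ.p' * φ.q - φ.p * φ.q' ≠ 0 := by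
    rw [← abs_ne_zero, φ.abs_det]
    exact one_ne_zero
  rw [map, map, div_eq_div_iff (φ.denom_pos ht).ne' (φ.denom_pos hu).ne'] at h
  exact mul_left_cancel₀ hdet (by linear_combination h)

theorem gaussSet_image {S : Set ℝ} (hS : MeasurableSet S) (hS0 : S ⊆ Ici 0) :
    gaussSet (φ.map '' S) = 1 / Real.log 2 * ∫ t in S, φ.density t := by
  rw [gaussSet, integral_image_eq_integral_abs_deriv_smul hS
    (fun t ht => (φ.hasDerivAt_map (hS0 ht)).hasDerivWithinAt) (φ.injOn_map.mono hS0)]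
  congr 1
  refine setIntegral_congr_fun hS fun t ht => ?_
  have hdenom := φ.denom_pos (hS0 ht)
  simp only [smul_eq_mul, density]
  rw [φ.one_add_map (hS0 ht), abs_div, φ.abs_det, abs_of_pos (pow_pos hdenom 2)]
  field_simp

theorem density_zero_pos : 0 < φ.density 0 :=
  one_div_pos.2 (mul_pos (φ.num_add_denom_pos le_rfl) (φ.denom_pos le_rfl))

theorem density_le_density_zero (ht : 0 ≤ t) : φ.density t ≤ φ.density 0 := by
  have hsum_le : φ.p + φ.q + (φ.p' + φ.q') * 0 ≤ φ.p + φ.q + (φ.p' + φ.q') * t :=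
    add_le_add_right (mul_le_mul_of_nonneg_left ht (add_nonneg φ.p'_nonneg φ.q'_nonneg)) _
  have hdenom_le : φ.q + φ.q' * 0 ≤ φ.q + φ.q' * t :=
    add_le_add_right (mul_le_mul_of_nonneg_left ht φ.q'_nonneg) _
  exact one_div_le_one_div_of_le (mul_pos (φ.num_add_denom_pos le_rfl) (φ.denom_pos le_rfl))
    (mul_le_mul hsum_le hdenom_le (φ.denom_pos le_rfl).le (φ.num_add_denom_pos ht).le)

theorem density_zero_div_four_le_density (ht : t ∈ Icc 0 1) : φ.density 0 / 4 ≤ φ.density t := by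
  have hsum := φ.num_add_denom_pos ht.1
  have hdenom := φ.denom_pos ht.1
  have hsum_le : φ.p + φ.q + (φ.p' + φ.q') * t ≤ 2 * (φ.p + φ.q) := by
    linarith [mul_le_of_le_one_right (add_nonneg φ.p'_nonneg φ.q'_nonneg) ht.2, φ.p'_add_q'_le]
  have hdenom_le : φ.q + φ.q' * t ≤ 2 * φ.q := by
    linarith [mul_le_of_le_one_right φ.q'_nonneg ht.2, φ.q'_le_q]
  calc φ.density 0 / 4 = 1 / (2 * (φ.p + φ.q) * (2 * φ.q)) := by
        simp only [density, mul_zero, add_zero, div_div]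
        ring
    _ ≤ φ.density t := one_div_le_one_div_of_le (mul_pos hsum hdenom)
        (mul_le_mul hsum_le hdenom_le hdenom.le (hsum.le.trans hsum_le))

theorem integrableOn_density {S : Set ℝ} (hS : S ⊆ Icc 0 1) : IntegrableOn φ.density S := by
  have hcont : ContinuousOn φ.density (Icc 0 1) :=
    continuousOn_const.div (by fun_prop) fun t ht =>
      (mul_pos (φ.num_add_denom_pos ht.1) (φ.denom_pos ht.1)).ne'
  exact hcont.integrableOn_Icc.mono_set hS

section Distortion

variable {S T : Set ℝ} (hS : MeasurableSet S) (hS01 : S ⊆ Icc 0 1)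
include hS hS01

theorem gaussSet_image_le :
    gaussSet (φ.map '' S) ≤ 1 / Real.log 2 * (φ.density 0 * volume.real S) := by
  rw [φ.gaussSet_image hS fun t ht => (hS01 ht).1]
  gcongr
  calc ∫ t in S, φ.density t ≤ ∫ _ in S, φ.density 0 :=
        setIntegral_mono_on (φ.integrableOn_density hS01)
          (integrableOn_const (measure_ne_top_of_subset hS01 (by simp))) hS
          fun t ht => φ.density_le_density_zero (hS01 ht).1
    _ = φ.density 0 * volume.real S := by rw [setIntegral_const, smul_eq_mul, mul_comm]

theorem le_gaussSet_image :
    1 / Real.log 2 * (φ.density 0 / 4 * volume.real S) ≤ gaussSet (φ.map '' S) := by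
  rw [φ.gaussSet_image hS fun t ht => (hS01 ht).1]
  gcongr
  exact setIntegral_ge_of_const_le_real hS (measure_ne_top_of_subset hS01 (by simp))
    (fun t ht => φ.density_zero_div_four_le_density (hS01 ht)) (φ.integrableOn_density hS01)

theorem gaussSet_image_pos (hvol : 0 < volume.real S) : 0 < gaussSet (φ.map '' S) := by
  have hbound : 0 < 1 / Real.log 2 * (φ.density 0 / 4 * volume.real S) :=
    mul_pos (one_div_pos.2 (Real.log_pos one_lt_two))
      (mul_pos (div_pos φ.density_zero_pos four_pos) hvol)
  exact hbound.trans_le (φ.le_gaussSet_image hS hS01)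

theorem volume_mul_gaussSet_image_le (hT : MeasurableSet T) (hT01 : T ⊆ Icc 0 1) :
    volume.real T * gaussSet (φ.map '' S) ≤ 4 * volume.real S * gaussSet (φ.map '' T) :=
  calc volume.real T * gaussSet (φ.map '' S)
      ≤ volume.real T * (1 / Real.log 2 * (φ.density 0 * volume.real S)) := by
        gcongr
        exact φ.gaussSet_image_le hS hS01
    _ = 4 * volume.real S * (1 / Real.log 2 * (φ.density 0 / 4 * volume.real T)) := by ring
    _ ≤ 4 * volume.real S * gaussSet (φ.map '' T) := by
        gcongr
        exact φ.le_gaussSet_image hT hT01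

end Distortion

end MobiusBranch

theorem gaussSet_cfCylinder_pos (w : List ℕ+) : 0 < gaussSet (cfCylinder w) := by
  rw [MobiusBranch.cfCylinder_eq_image]
  exact MobiusBranch.gaussSet_image_pos _ (measurableSet_cfCylinder _) (cfCylinder_subset_Icc _)
    (by rw [volume_real_cfCylinder_nil]; exact one_pos)

theorem gaussSet_cfCylinder_append_le (w v : List ℕ+) :
    gaussSet (cfCylinder (w ++ v)) ≤ gaussSet (cfCylinder w) :=
  gaussSet_mono (measurableSet_cfCylinder w) (cfCylinder_append_subset w v)
    (cfCylinder_subset_Icc w)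

theorem volume_mul_gaussSet_cfCylinder_le (w v : List ℕ+) :
    volume.real (cfCylinder v) * gaussSet (cfCylinder w) ≤
      4 * gaussSet (cfCylinder (w ++ v)) := by
  have h := (MobiusBranch.ofDigits w).volume_mul_gaussSet_image_le
    (measurableSet_cfCylinder []) (cfCylinder_subset_Icc [])
    (measurableSet_cfCylinder v) (cfCylinder_subset_Icc v)
  rwa [← MobiusBranch.cfCylinder_eq_image, ← MobiusBranch.cfCylinder_append,
    volume_real_cfCylinder_nil, mul_one] at h

theorem one_div_mul_gaussSet_cfCylinder_rpow_le {s : ℝ} (hs : s ≤ 1 / 2) (w : List ℕ+) (i : ℕ+) :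
    1 / (2 * ((i : ℕ) + 1)) * gaussSet (cfCylinder w) ^ s ≤
      gaussSet (cfCylinder (w ++ [i])) ^ s := by
  refine mul_rpow_le_rpow_of_sq_mul_le (gaussSet_cfCylinder_pos _)
    (gaussSet_cfCylinder_append_le w [i]) ?_ hs
  have hi : (0 : ℝ) < (i : ℕ) := Nat.cast_pos.2 i.pos
  have hγ := gaussSet_cfCylinder_pos w
  calc (1 / (2 * ((i : ℕ) + 1))) ^ 2 * gaussSet (cfCylinder w)
      = 1 / (((i : ℕ) + 1) * ((i : ℕ) + 1)) * gaussSet (cfCylinder w) / 4 := by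
        field_simp
        norm_num
    _ ≤ 1 / ((i : ℕ) * ((i : ℕ) + 1)) * gaussSet (cfCylinder w) / 4 := by
        gcongr ?_ * _ / 4
        exact one_div_le_one_div_of_le (mul_pos hi (by positivity)) (by gcongr; linarith)
    _ ≤ gaussSet (cfCylinder (w ++ [i])) := by
        have h := volume_mul_gaussSet_cfCylinder_le w [i]
        rw [volume_real_cfCylinder_singleton] at h
        linarith

theorem stmt11_general {s : ℝ} (hs : s ≤ 1 / 2) (x : List ℕ+) {a b : ℕ+} (hab : a ≤ b) :
    Real.log (((b : ℕ) + 2) / ((a : ℕ) + 1)) / 2 * gaussSet (cfCylinder x) ^ s ≤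
      ∑ i ∈ Finset.Icc a b, gaussSet (cfCylinder (x ++ [i])) ^ s := by
  have hγ := gaussSet_cfCylinder_pos x
  calc Real.log (((b : ℕ) + 2) / ((a : ℕ) + 1)) / 2 * gaussSet (cfCylinder x) ^ s
      ≤ (∑ i ∈ Finset.Icc a b, (1 / ((i : ℕ) + 1) : ℝ)) / 2 * gaussSet (cfCylinder x) ^ s := by
        rw [sum_Icc_pnat_eq_sum_Icc_nat fun i => (1 / (i + 1) : ℝ)]
        gcongr
        exact log_div_le_sum_Icc_one_div hab
    _ = ∑ i ∈ Finset.Icc a b, 1 / (2 * ((i : ℕ) + 1)) * gaussSet (cfCylinder x) ^ s := by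
        rw [Finset.sum_div, Finset.sum_mul]
        refine Finset.sum_congr rfl fun i _ => ?_
        rw [div_div, mul_comm 2]
    _ ≤ ∑ i ∈ Finset.Icc a b, gaussSet (cfCylinder (x ++ [i])) ^ s :=
        Finset.sum_le_sum fun i _ => one_div_mul_gaussSet_cfCylinder_rpow_le hs x i

theorem stmt11 (s : ℝ) (h0 : 0 < s) (h1 : s ≤ 1 / 2) (x : List ℕ+) (a : ℕ+) :
    ((Real.log 25 - 1) / 2) * gaussSet (cfCylinder x) ^ s ≤
        ∑ i ∈ Finset.Icc a (50 * a), gaussSet (cfCylinder (x ++ [i])) ^ s ∧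
      1 < (Real.log 25 - 1) / 2 := by
  have hγ := Real.rpow_nonneg (gaussSet_cfCylinder_pos x).le s
  have ha : a ≤ 50 * a := le_mul_of_one_le_left' one_le
  exact ⟨(mul_le_mul_of_nonneg_right (by linarith [log_25_le_log_div a]) hγ).trans
    (stmt11_general h1 x ha), by linarith [three_lt_log_25]⟩
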